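/- Let (γ_k)_{k≥1} be a sequence of positive real numbers, let (a_k)_{k≥1} be a real sequence with Σ_{k=1}^∞ a_k² < ∞, and let T > 0. Then ∫₀ᵀ ( Σ_{k=1}^∞ γ_k^{1/2} e^{−2γ_k t} a_k² )² dt ≤ (1/4)·( Σ_{k=1}^∞ a_k² )². -/

import Mathlib

open MeasureTheory

/-!
The function `t ↦ √γ e^{-2γt}` has norm `1/2` in `L²(0, ∞)`, whatever `γ > 0` is. The series is a
superposition of such functions with coefficients `aₖ²`, so by Minkowski's inequality its `L²` norm
is at most `(1/2) ∑ₖ aₖ²`.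
-/

open scoped ENNReal

section LpNorm

variable {α E : Type*} [MeasurableSpace α] {μ : Measure α} {p : ℝ≥0∞} [NormedAddCommGroup E]

lemma lpNorm_two_sq_eq_integral_norm_sq {f : α → E} (hf : AEStronglyMeasurable f μ) :
    lpNorm f 2 μ ^ 2 = ∫ x, ‖f x‖ ^ 2 ∂μ := by
  rw [lpNorm_eq_integral_norm_rpow_toReal two_ne_zero ENNReal.ofNat_ne_top hf]
  simp only [ENNReal.toReal_ofNat, Real.rpow_ofNat]
  exact Real.rpow_inv_natCast_pow (by positivity) two_ne_zero

lemma norm_toLp_eq_lpNorm {f : α → E} (hf : MemLp f p μ) : ‖hf.toLp‖ = lpNorm f p μ := by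
  rw [Lp.norm_toLp, toReal_eLpNorm hf.1]

section SMulConst

variable [NormedSpace ℝ E] {φ : α → ℝ}

lemma memLp_smul_const (hφ : MemLp φ p μ) (c : E) : MemLp (fun x => φ x • c) p μ :=
  (hφ.const_mul ‖c‖).congr_norm (hφ.1.smul_const c) <| .of_forall fun x => by
    rw [norm_mul, norm_norm, norm_smul, mul_comm]

lemma lpNorm_smul_const (hφ : AEStronglyMeasurable φ μ) (c : E) :
    lpNorm (fun x => φ x • c) p μ = lpNorm φ p μ * ‖c‖ := by
  have hnorm : eLpNorm (fun x => φ x • c) p μ = eLpNorm (‖c‖ • φ) p μ :=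
    eLpNorm_congr_norm_ae <| .of_forall fun x => by
      rw [Pi.smul_apply, norm_smul, norm_smul, norm_norm, mul_comm]
  rw [← toReal_eLpNorm (hφ.smul_const c), hnorm, toReal_eLpNorm (hφ.const_smul _),
    lpNorm_const_smul, coe_nnnorm, norm_norm, mul_comm]

end SMulConst

section Minkowski

variable {ι : Type*} [Countable ι] [CompleteSpace E] {f : ι → α → E}

lemma coeFn_tsum_toLp_ae_eq [Fact (1 ≤ p)] (hf : ∀ i, MemLp (f i) p μ)
    (hsum : Summable fun i => lpNorm (f i) p μ) :
    ⇑(∑' i, (hf i).toLp) =ᵐ[μ] fun x => ∑' i, f i x := by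
  have hsum' : Summable fun i => ‖(hf i).toLp‖ := by simpa only [norm_toLp_eq_lpNorm] using hsum
  filter_upwards [Lp.coeFn_tsum (tsum_enorm_ne_top_iff_summable_norm.2 hsum'),
    ae_all_iff.2 fun i => (hf i).coeFn_toLp] with x hx hfx
  exact hx.trans (tsum_congr hfx)

lemma memLp_tsum (hp : 1 ≤ p) (hf : ∀ i, MemLp (f i) p μ)
    (hsum : Summable fun i => lpNorm (f i) p μ) : MemLp (fun x => ∑' i, f i x) p μ :=
  have : Fact (1 ≤ p) := ⟨hp⟩
  (memLp_congr_ae (coeFn_tsum_toLp_ae_eq hf hsum)).1 (Lp.memLp _)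

lemma lpNorm_tsum_le (hp : 1 ≤ p) (hf : ∀ i, MemLp (f i) p μ)
    (hsum : Summable fun i => lpNorm (f i) p μ) :
    lpNorm (fun x => ∑' i, f i x) p μ ≤ ∑' i, lpNorm (f i) p μ := by
  have : Fact (1 ≤ p) := ⟨hp⟩
  calc lpNorm (fun x => ∑' i, f i x) p μ = ‖∑' i, (hf i).toLp‖ := by
        rw [← toReal_eLpNorm (memLp_tsum hp hf hsum).1,
          ← eLpNorm_congr_ae (coeFn_tsum_toLp_ae_eq hf hsum), ← Lp.norm_def]
    _ ≤ ∑' i, ‖(hf i).toLp‖ :=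
        norm_tsum_le_tsum_norm (by simpa only [norm_toLp_eq_lpNorm] using hsum)
    _ = ∑' i, lpNorm (f i) p μ := by simp only [norm_toLp_eq_lpNorm]

lemma memLp_and_lpNorm_tsum_smul_le [NormedSpace ℝ E] {φ : ι → α → ℝ} {c : ι → E} {C : ℝ}
    (hp : 1 ≤ p) (hφ : ∀ i, MemLp (φ i) p μ)
    (hC : ∀ i, lpNorm (φ i) p μ ≤ C) (hc : Summable fun i => ‖c i‖) :
    MemLp (fun x => ∑' i, φ i x • c i) p μ ∧
      lpNorm (fun x => ∑' i, φ i x • c i) p μ ≤ C * ∑' i, ‖c i‖ := by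
  have hmem (i : ι) : MemLp (fun x => φ i x • c i) p μ := memLp_smul_const (hφ i) (c i)
  have hle (i : ι) : lpNorm (fun x => φ i x • c i) p μ ≤ C * ‖c i‖ := by
    rw [lpNorm_smul_const (hφ i).1]
    gcongr
    exact hC i
  have hsum : Summable fun i => lpNorm (fun x => φ i x • c i) p μ :=
    .of_nonneg_of_le (fun _ => lpNorm_nonneg) hle (hc.mul_left C)
  refine ⟨memLp_tsum hp hmem hsum, (lpNorm_tsum_le hp hmem hsum).trans ?_⟩
  rw [← tsum_mul_left]
  exact hsum.tsum_le_tsum hle (hc.mul_left C)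

end Minkowski

end LpNorm

section SqrtMulExp

variable {γ : ℝ}

lemma sq_sqrt_mul_exp_neg_two_mul (hγ : 0 ≤ γ) (t : ℝ) :
    (√γ * Real.exp (-2 * γ * t)) ^ 2 = γ * Real.exp (-4 * γ * t) := by
  rw [mul_pow, Real.sq_sqrt hγ, ← Real.exp_nat_mul]
  ring_nf

lemma integral_Ioi_mul_exp_neg_four_mul (hγ : 0 < γ) :
    ∫ t in Set.Ioi (0 : ℝ), γ * Real.exp (-4 * γ * t) = 1 / 4 := by
  rw [integral_const_mul, integral_exp_mul_Ioi (by linarith), mul_zero, Real.exp_zero]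
  field_simp

lemma memLp_two_sqrt_mul_exp (hγ : 0 ≤ γ) :
    MemLp (fun t => √γ * Real.exp (-2 * γ * t)) 2 (volume.restrict (Set.Ioi 0)) := by
  rw [memLp_two_iff_integrable_sq (by fun_prop)]
  simp only [sq_sqrt_mul_exp_neg_two_mul hγ]
  obtain rfl | hpos := hγ.eq_or_lt
  · simp
  · exact (integrableOn_exp_mul_Ioi (by linarith) 0).const_mul γ

lemma lpNorm_two_sqrt_mul_exp_le (hγ : 0 ≤ γ) :
    lpNorm (fun t => √γ * Real.exp (-2 * γ * t)) 2 (volume.restrict (Set.Ioi 0)) ≤ 1 / 2 := by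
  refine le_of_sq_le_sq ?_ (by norm_num)
  rw [lpNorm_two_sq_eq_integral_norm_sq (by fun_prop)]
  simp only [Real.norm_eq_abs, sq_abs, sq_sqrt_mul_exp_neg_two_mul hγ]
  obtain rfl | hpos := hγ.eq_or_lt
  · norm_num
  · rw [integral_Ioi_mul_exp_neg_four_mul hpos]
    norm_num

end SqrtMulExp

theorem integral_tsum_sqrt_exp_sq_le_general {ι E : Type*} [Countable ι] [NormedAddCommGroup E]
    [NormedSpace ℝ E] [CompleteSpace E] {γ : ι → ℝ} (hγ : ∀ i, 0 ≤ γ i) {c : ι → E}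
    (hc : Summable fun i => ‖c i‖) :
    IntegrableOn (fun t => ‖∑' i, (√(γ i) * Real.exp (-2 * γ i * t)) • c i‖ ^ 2) (Set.Ioi 0) ∧
      ∫ t in Set.Ioi (0 : ℝ), ‖∑' i, (√(γ i) * Real.exp (-2 * γ i * t)) • c i‖ ^ 2 ≤
        1 / 4 * (∑' i, ‖c i‖) ^ 2 := by
  obtain ⟨hmem, hle⟩ := memLp_and_lpNorm_tsum_smul_le one_le_two
    (fun i => memLp_two_sqrt_mul_exp (hγ i)) (fun i => lpNorm_two_sqrt_mul_exp_le (hγ i)) hc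
  refine ⟨hmem.integrable_norm_pow two_ne_zero, ?_⟩
  rw [← lpNorm_two_sq_eq_integral_norm_sq hmem.1]
  calc _ ≤ (1 / 2 * ∑' i, ‖c i‖) ^ 2 := pow_le_pow_left₀ lpNorm_nonneg hle 2
    _ = 1 / 4 * (∑' i, ‖c i‖) ^ 2 := by ring

/-- If `γ k > 0` and `∑ a k ^ 2 < ∞`, then
`∫₀ᵀ ( ∑ₖ γₖ^{1/2} e^{−2 γₖ t} aₖ² )² dt ≤ (1/4) (∑ₖ aₖ²)²`. -/
theorem integral_tsum_sqrt_exp_sq_le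
    (γ a : ℕ → ℝ) (hγ : ∀ k, 0 < γ k) (ha : Summable fun k => (a k) ^ 2)
    (T : ℝ) (hT : 0 < T) :
    (∫ t in Set.Ioc (0 : ℝ) T,
        (∑' k, Real.sqrt (γ k) * Real.exp (-2 * γ k * t) * (a k) ^ 2) ^ 2) ≤
      (1 / 4) * (∑' k, (a k) ^ 2) ^ 2 := by
  have h := integral_tsum_sqrt_exp_sq_le_general (fun k => (hγ k).le) (c := fun k => a k ^ 2)
    (by simpa using ha)
  simp only [smul_eq_mul, Real.norm_eq_abs, sq_abs, abs_sq] at h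
  exact (setIntegral_mono_set h.1 (.of_forall fun t => sq_nonneg _)
    Set.Ioc_subset_Ioi_self.eventuallyLE).trans h.2
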